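/- (One-sided concentration of the empirical expansion ratio for a fixed set.) Let A, B, U ⊆ X with P(A), P(B) > 0, and let n : X → X be a fixed (deterministic) map with n(x) ∈ B for every x ∈ A. Let p = P({x : n(x) ∈ U} | A) and q = P(U | B), and assume q ≥ q̄ for some q̄ > 0. Let x_1, …, x_{n_A} be i.i.d. with law P(·|A) and z_1, …, z_{n_B} i.i.d. with law P(·|B), all mutually independent. Set p̂ = (1/n_A)·Σ_{i=1}^{n_A} 1[n(x_i) ∈ U], q̂ = (1/n_B)·Σ_{j=1}^{n_B} 1[z_j ∈ U], and γ = n_B·q̄/n_A. Then for any δ ∈ (0,1], the probability that p̂/q̂ − p/q > δ is at most 2·exp( −2·n_A·δ² · γ·q̄² / (4 + √γ)² ). -/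

import Mathlib

open Finset
open scoped Classical

noncomputable section

variable {X : Type*} [Fintype X] [DecidableEq X]

/-- Probability of a finite set of points under the weight function `μ`. -/
def Pw (μ : X → ℝ) (A : Finset X) : ℝ := ∑ x ∈ A, μ x

/-- Conditional probability `P(A | B) = P(A ∩ B) / P(B)`. -/
def cPw (μ : X → ℝ) (A B : Finset X) : ℝ := Pw μ (A ∩ B) / Pw μ B

/-- The conditional point mass function of `P(· | A)`. -/
def condPMF (μ : X → ℝ) (A : Finset X) (x : X) : ℝ :=
  (if x ∈ A then μ x else 0) / Pw μ A

/-- The probability that an i.i.d. sample from `P(· | A)` equals the tuple `xs`. -/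
def prodW (μ : X → ℝ) (A : Finset X) {n : ℕ} (xs : Fin n → X) : ℝ :=
  ∏ j, condPMF μ A (xs j)

/-- Probability of an event `E` of two mutually independent i.i.d. samples,
of sizes `nA` from `P(· | A)` and `nB` from `P(· | B)`. -/
def samplePr (μ : X → ℝ) (A B : Finset X) (nA nB : ℕ)
    (E : (Fin nA → X) → (Fin nB → X) → Prop) : ℝ :=
  ∑ xs : Fin nA → X, ∑ zs : Fin nB → X,
    prodW μ A xs * prodW μ B zs * (if E xs zs then 1 else 0)

/-- Probability of an event of two i.i.d. samples together with an independent
ghost copy of each. -/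
def samplePr4 (μ : X → ℝ) (A B : Finset X) (nA nB : ℕ)
    (E : (Fin nA → X) → (Fin nB → X) → (Fin nA → X) → (Fin nB → X) → Prop) : ℝ :=
  ∑ xs : Fin nA → X, ∑ zs : Fin nB → X, ∑ xs' : Fin nA → X, ∑ zs' : Fin nB → X,
    prodW μ A xs * prodW μ B zs * prodW μ A xs' * prodW μ B zs' *
      (if E xs zs xs' zs' then 1 else 0)

/-- Empirical frequency `(1/n)·Σ_j 1[g(x_j) ∈ U]` of a sample `xs`. -/
def empFreq (U : Finset X) (g : X → X) {n : ℕ} (xs : Fin n → X) : ℝ :=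
  (∑ j, if g (xs j) ∈ U then (1 : ℝ) else 0) / n

/-- The empirical expansion ratio `ĉ(U) = p̂(U)/q̂(U)` of a pair of samples. -/
def empRatio (U : Finset X) (g : X → X) {nA nB : ℕ}
    (xs : Fin nA → X) (zs : Fin nB → X) : ℝ :=
  empFreq U g xs / empFreq U id zs

/-!
If `p̂ < p + a`, `q̂ > q (1 - e)` and `a + 2 e ≤ δ q`, then `p̂ ≤ (p / q + δ) q̂`, because
`(p + δ q) (1 - e) ≥ p + δ q - 2 e` as soon as `p + δ q ≤ 2`. The two exceptional events are
controlled by Hoeffding's inequality for `p̂` and by the multiplicative Chernoff bound for `q̂`;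
`a` and `e` are chosen so that both bounds have the same exponent.
-/

open MeasureTheory ProbabilityTheory

section RealEstimates

lemma exp_neg_le_one_sub_add_sq_div_two {t : ℝ} (ht : 0 ≤ t) :
    Real.exp (-t) ≤ 1 - t + t ^ 2 / 2 := by
  have hpos : 0 < 1 + t + t ^ 2 / 2 := by positivity
  calc Real.exp (-t) = 1 / Real.exp t := by rw [Real.exp_neg, one_div]
    _ ≤ 1 / (1 + t + t ^ 2 / 2) := by gcongr; exact Real.quadratic_le_exp_of_nonneg ht
    _ ≤ 1 - t + t ^ 2 / 2 := by
      rw [div_le_iff₀ hpos]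
      linarith [show (1 - t + t ^ 2 / 2) * (1 + t + t ^ 2 / 2) = 1 + t ^ 4 / 4 by ring,
        show 0 ≤ t ^ 4 by positivity]

lemma div_le_div_add_of_le_of_mul_le {p q p' q' a e δ : ℝ} (hp : 0 ≤ p) (hq : 0 < q)
    (he0 : 0 ≤ e) (he1 : e ≤ 1) (hδ : 0 ≤ δ) (hpδ : p + δ * q ≤ 2) (hae : a + 2 * e ≤ δ * q)
    (hp' : p' ≤ p + a) (hq' : q * (1 - e) < q') : p' / q' ≤ p / q + δ := by
  have hq'_pos : 0 < q' := (mul_nonneg hq.le (sub_nonneg.2 he1)).trans_lt hq'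
  rw [div_le_iff₀ hq'_pos]
  calc p' ≤ (p + δ * q) * (1 - e) := by
        linarith [mul_le_mul_of_nonneg_right hpδ he0]
    _ = (p / q + δ) * (q * (1 - e)) := by field_simp
    _ ≤ (p / q + δ) * q' := by gcongr

/-- Splitting the deviation `c` in the proportion `√γ : 4`, where `γ = b / k`, balances the
Hoeffding exponent of the numerator against the Chernoff exponent of the denominator. -/
lemma exists_add_two_mul_eq_of_exponents_eq {k b c : ℝ} (hk : 0 < k) (hb : 0 ≤ b) (hc : 0 ≤ c) :
    ∃ a e, 0 ≤ a ∧ 0 ≤ e ∧ a + 2 * e = c ∧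
      2 * k * a ^ 2 = 2 * k * c ^ 2 * ((b / k) / (4 + √(b / k)) ^ 2) ∧
      b * e ^ 2 / 2 = 2 * k * c ^ 2 * ((b / k) / (4 + √(b / k)) ^ 2) := by
  obtain ⟨γ, rfl⟩ : ∃ γ, b = k * γ := ⟨b / k, by field_simp⟩
  have hγ : 0 ≤ γ := nonneg_of_mul_nonneg_right hb hk
  rw [mul_div_cancel_left₀ γ hk.ne']
  refine ⟨c * √γ / (4 + √γ), 2 * c / (4 + √γ), by positivity, by positivity, ?_, ?_, ?_⟩
  · field_simp
    ring
  · rw [div_pow, mul_pow, Real.sq_sqrt hγ]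
    ring
  · rw [div_pow]
    ring

end RealEstimates

section TailBounds

variable {ι Ω : Type*} {mΩ : MeasurableSpace Ω} {P : Measure Ω}

lemma mgf_neg_le_of_mem_Icc [IsProbabilityMeasure P] {Y : Ω → ℝ} (hY : AEMeasurable Y P)
    (hmem : ∀ᵐ ω ∂P, Y ω ∈ Set.Icc 0 1) {a : ℝ} (ha : 0 ≤ a) :
    mgf Y P (-a) ≤ Real.exp (-(a - a ^ 2 / 2) * P[Y]) := by
  have hint : Integrable Y P := Integrable.of_mem_Icc 0 1 hY hmem
  have hpoint : ∀ᵐ ω ∂P, Real.exp (-a * Y ω) ≤ 1 + -(a - a ^ 2 / 2) * Y ω := by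
    filter_upwards [hmem] with ω ⟨h0, h1⟩
    have hexp := exp_neg_le_one_sub_add_sq_div_two (mul_nonneg ha h0)
    have hsq : a ^ 2 * Y ω ^ 2 ≤ a ^ 2 * Y ω := by
      gcongr
      exact pow_le_of_le_one h0 h1 two_ne_zero
    rw [neg_mul]
    linarith
  calc mgf Y P (-a) ≤ ∫ ω, (1 + -(a - a ^ 2 / 2) * Y ω) ∂P :=
        integral_mono_ae (integrable_exp_mul_of_mem_Icc hY hmem)
          ((integrable_const 1).add (hint.const_mul _)) hpoint
    _ = -(a - a ^ 2 / 2) * P[Y] + 1 := by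
        rw [integral_add (integrable_const 1) (hint.const_mul _), integral_const_mul]
        simp [add_comm]
    _ ≤ Real.exp (-(a - a ^ 2 / 2) * P[Y]) := Real.add_one_le_exp _

variable {Y : ι → Ω → ℝ} {s : Finset ι}

lemma measureReal_sum_integral_add_le_sum_le_of_mem_Icc (hindep : iIndepFun Y P)
    (hY : ∀ i, AEMeasurable (Y i) P) (hmem : ∀ i ∈ s, ∀ᵐ ω ∂P, Y i ω ∈ Set.Icc 0 1)
    {ε : ℝ} (hε : 0 ≤ ε) :
    P.real {ω | ∑ i ∈ s, P[Y i] + ε ≤ ∑ i ∈ s, Y i ω} ≤ Real.exp (-2 * ε ^ 2 / #s) := by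
  have := hindep.isProbabilityMeasure
  have hcentered : iIndepFun (fun i ω ↦ Y i ω - P[Y i]) P :=
    hindep.comp (fun i y ↦ y - ∫ ω, Y i ω ∂P) fun _ ↦ measurable_id.sub_const _
  have htail := HasSubgaussianMGF.measure_sum_ge_le_of_iIndepFun hcentered
    (fun i hi ↦ hasSubgaussianMGF_of_mem_Icc (hY i) (hmem i hi)) hε
  convert htail using 2
  · simp only [Finset.sum_sub_distrib, le_sub_iff_add_le']
  · have hvar : ((∑ _i ∈ s, (‖(1 : ℝ) - 0‖₊ / 2) ^ 2 : NNReal) : ℝ) = #s / 4 := by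
      norm_num [div_eq_mul_inv]
    rw [hvar]
    ring

lemma measureReal_sum_le_one_sub_mul_le_of_mem_Icc (hindep : iIndepFun Y P)
    (hY : ∀ i, AEMeasurable (Y i) P) (hmem : ∀ i ∈ s, ∀ᵐ ω ∂P, Y i ω ∈ Set.Icc 0 1)
    {a : ℝ} (ha : 0 ≤ a) :
    P.real {ω | ∑ i ∈ s, Y i ω ≤ (1 - a) * ∑ i ∈ s, P[Y i]} ≤
      Real.exp (-(a ^ 2 * ∑ i ∈ s, P[Y i]) / 2) := by
  have := hindep.isProbabilityMeasure
  set m := ∑ i ∈ s, P[Y i] with hm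
  have hmem_sum : ∀ᵐ ω ∂P, (∑ i ∈ s, Y i) ω ∈ Set.Icc (0 : ℝ) #s := by
    filter_upwards [(s.eventually_all).2 hmem] with ω hω
    rw [Finset.sum_apply]
    exact ⟨Finset.sum_nonneg fun i hi ↦ (hω i hi).1,
      (Finset.sum_le_sum fun i hi ↦ (hω i hi).2).trans (by simp)⟩
  have hint : Integrable (fun ω ↦ Real.exp (-a * (∑ i ∈ s, Y i) ω)) P :=
    integrable_exp_mul_of_mem_Icc (Finset.aemeasurable_sum s fun i _ ↦ hY i) hmem_sum
  calc P.real {ω | ∑ i ∈ s, Y i ω ≤ (1 - a) * m}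
      = P.real {ω | (∑ i ∈ s, Y i) ω ≤ (1 - a) * m} := by simp only [Finset.sum_apply]
    _ ≤ Real.exp (-(-a) * ((1 - a) * m)) * mgf (∑ i ∈ s, Y i) P (-a) :=
        measure_le_le_exp_mul_mgf _ (neg_nonpos.2 ha) hint
    _ = Real.exp (a * (1 - a) * m) * ∏ i ∈ s, mgf (Y i) P (-a) := by
        rw [hindep.mgf_sum₀ hY, neg_neg, mul_assoc]
    _ ≤ Real.exp (a * (1 - a) * m) * ∏ i ∈ s, Real.exp (-(a - a ^ 2 / 2) * P[Y i]) := by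
        gcongr with i hi
        · exact fun i _ ↦ mgf_nonneg
        · exact mgf_neg_le_of_mem_Icc (hY i) (hmem i hi) ha
    _ = Real.exp (-(a ^ 2 * m) / 2) := by
        rw [← Real.exp_sum, ← Finset.mul_sum, ← hm, ← Real.exp_add]
        ring_nf

end TailBounds

section FiniteConditional

variable {α : Type*} {μ : α → ℝ}

lemma Pw_nonneg (hμ : ∀ x, 0 ≤ μ x) (A : Finset α) : 0 ≤ Pw μ A :=
  Finset.sum_nonneg fun x _ ↦ hμ x

variable [DecidableEq α]

lemma cPw_nonneg (hμ : ∀ x, 0 ≤ μ x) (V A : Finset α) : 0 ≤ cPw μ V A :=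
  div_nonneg (Pw_nonneg hμ _) (Pw_nonneg hμ _)

lemma cPw_le_one (hμ : ∀ x, 0 ≤ μ x) (V A : Finset α) : cPw μ V A ≤ 1 :=
  div_le_one_of_le₀
    (Finset.sum_le_sum_of_subset_of_nonneg Finset.inter_subset_right fun x _ _ ↦ hμ x)
    (Pw_nonneg hμ A)

lemma condPMF_eq_cPw_singleton (μ : α → ℝ) (A : Finset α) (x : α) :
    condPMF μ A x = cPw μ {x} A := by
  by_cases hx : x ∈ A <;> simp [condPMF, cPw, Pw, hx]

end FiniteConditional

section Hit

variable {α : Type*} (U : Finset α) (g : α → α) {n : ℕ}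

/-- The indicator `1[g(x_j) ∈ U]` as a random variable of the sample. -/
def hit (j : Fin n) (xs : Fin n → α) : ℝ :=
  (g ⁻¹' U).indicator 1 (xs j)

lemma empFreq_eq_sum_hit_div [DecidableEq α] (xs : Fin n → α) :
    empFreq U g xs = (∑ j, hit U g j xs) / n := by
  simp [empFreq, hit, Set.indicator_apply]

lemma hit_mem_Icc (j : Fin n) (xs : Fin n → α) : hit U g j xs ∈ Set.Icc 0 1 := by
  by_cases h : g (xs j) ∈ U <;> simp [hit, h]

end Hit

section SampleLaw

variable {α : Type*} [Fintype α] [MeasurableSpace α]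

/-- The measure on `α` with point masses `μ`; negative weights count as zero. -/
def weightMeasure (μ : α → ℝ) : Measure α := ∑ x, ENNReal.ofReal (μ x) • Measure.dirac x

/-- The law of an i.i.d. sample of size `n` from `P(· | A)`. -/
def sampleLaw (μ : α → ℝ) (A : Finset α) (n : ℕ) : Measure (Fin n → α) :=
  Measure.pi fun _ ↦ (weightMeasure μ)[|(A : Set α)]

instance (μ : α → ℝ) : IsFiniteMeasure (weightMeasure μ) where
  measure_univ_lt_top := by simp [weightMeasure]

instance (μ : α → ℝ) (A : Finset α) (n : ℕ) : IsFiniteMeasure (sampleLaw μ A n) := by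
  unfold sampleLaw
  infer_instance

variable [MeasurableSingletonClass α] {μ : α → ℝ}

lemma weightMeasure_real (hμ : ∀ x, 0 ≤ μ x) (S : Finset α) :
    (weightMeasure μ).real S = Pw μ S := by
  rw [← sum_measureReal_singleton]
  refine Finset.sum_congr rfl fun x _ ↦ ?_
  simp [weightMeasure, measureReal_def, Set.indicator_apply, hμ]

lemma isProbabilityMeasure_cond_weightMeasure (hμ : ∀ x, 0 ≤ μ x) {A : Finset α}
    (hA : 0 < Pw μ A) : IsProbabilityMeasure (weightMeasure μ)[|(A : Set α)] := by
  refine cond_isProbabilityMeasure fun h ↦ hA.ne' ?_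
  rw [← weightMeasure_real hμ, measureReal_def, h, ENNReal.toReal_zero]

lemma isProbabilityMeasure_sampleLaw (hμ : ∀ x, 0 ≤ μ x) {A : Finset α} (hA : 0 < Pw μ A)
    (n : ℕ) : IsProbabilityMeasure (sampleLaw μ A n) := by
  have := isProbabilityMeasure_cond_weightMeasure hμ hA
  unfold sampleLaw
  infer_instance

lemma iIndepFun_hit (U : Finset α) (g : α → α) {A : Finset α} {n : ℕ} (hμ : ∀ x, 0 ≤ μ x)
    (hA : 0 < Pw μ A) : iIndepFun (hit U g) (sampleLaw μ A n) := by
  have := isProbabilityMeasure_cond_weightMeasure hμ hA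
  exact iIndepFun_pi (X := fun _ ↦ (g ⁻¹' U).indicator 1)
    fun _ ↦ (measurable_of_finite _).aemeasurable

variable [DecidableEq α]

lemma cond_weightMeasure_real (hμ : ∀ x, 0 ≤ μ x) (A V : Finset α) :
    (weightMeasure μ)[|(A : Set α)].real V = cPw μ V A := by
  rw [measureReal_def, cond_apply A.measurableSet, ENNReal.toReal_mul, ENNReal.toReal_inv,
    ← Finset.coe_inter, ← measureReal_def, ← measureReal_def, weightMeasure_real hμ,
    weightMeasure_real hμ, cPw, Finset.inter_comm, inv_mul_eq_div]

lemma sampleLaw_real_singleton (hμ : ∀ x, 0 ≤ μ x) (A : Finset α) {n : ℕ} (xs : Fin n → α) :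
    (sampleLaw μ A n).real {xs} = prodW μ A xs := by
  simp only [sampleLaw, prodW, condPMF_eq_cPw_singleton, ← cond_weightMeasure_real hμ,
    measureReal_def, Measure.pi_singleton, ENNReal.toReal_prod, Finset.coe_singleton]

lemma samplePr_eq_measureReal (hμ : ∀ x, 0 ≤ μ x) (A B : Finset α) (nA nB : ℕ)
    (E : (Fin nA → α) → (Fin nB → α) → Prop) :
    samplePr μ A B nA nB E =
      ((sampleLaw μ A nA).prod (sampleLaw μ B nB)).real {ω | E ω.1 ω.2} := by
  rw [← Finset.coe_filter_univ, ← sum_measureReal_singleton, Finset.sum_filter,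
    Fintype.sum_prod_type, samplePr]
  refine Finset.sum_congr rfl fun xs _ ↦ Finset.sum_congr rfl fun zs _ ↦ ?_
  rw [← Set.singleton_prod_singleton, measureReal_prod_prod, sampleLaw_real_singleton hμ,
    sampleLaw_real_singleton hμ, mul_ite, mul_one, mul_zero]

variable {A : Finset α} {n : ℕ} {a : ℝ} (U : Finset α) (g : α → α)

lemma integral_hit (hμ : ∀ x, 0 ≤ μ x) (hA : 0 < Pw μ A) (j : Fin n) :
    ∫ xs, hit U g j xs ∂sampleLaw μ A n = cPw μ (univ.filter fun x ↦ g x ∈ U) A := by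
  have := isProbabilityMeasure_cond_weightMeasure hμ hA
  have hpre : g ⁻¹' U = ((univ.filter fun x ↦ g x ∈ U : Finset α) : Set α) := by ext; simp
  simp only [hit, sampleLaw]
  rw [integral_comp_eval (measurable_of_finite _).aestronglyMeasurable,
    integral_indicator_one (Set.toFinite _).measurableSet, hpre, cond_weightMeasure_real hμ]

theorem sampleLaw_real_cPw_add_le_empFreq (hμ : ∀ x, 0 ≤ μ x) (hA : 0 < Pw μ A) (hn : 0 < n)
    (ha : 0 ≤ a) :
    (sampleLaw μ A n).real {xs | cPw μ (univ.filter fun x ↦ g x ∈ U) A + a ≤ empFreq U g xs} ≤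
      Real.exp (-2 * n * a ^ 2) := by
  have hn' : (0 : ℝ) < n := Nat.cast_pos.2 hn
  have htail := measureReal_sum_integral_add_le_sum_le_of_mem_Icc (s := univ)
    (iIndepFun_hit U g (n := n) hμ hA) (fun _ ↦ (measurable_of_finite _).aemeasurable)
    (fun j _ ↦ .of_forall (hit_mem_Icc U g j)) (ε := n * a) (by positivity)
  simp only [integral_hit U g hμ hA, Finset.sum_const, Finset.card_univ, Fintype.card_fin,
    nsmul_eq_mul] at htail
  convert htail using 2
  · simp only [empFreq_eq_sum_hit_div, le_div_iff₀' hn', mul_add]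
  · field_simp

theorem sampleLaw_real_empFreq_le_cPw_mul_one_sub (hμ : ∀ x, 0 ≤ μ x) (hA : 0 < Pw μ A)
    (hn : 0 < n) (ha : 0 ≤ a) :
    (sampleLaw μ A n).real
        {xs | empFreq U g xs ≤ cPw μ (univ.filter fun x ↦ g x ∈ U) A * (1 - a)} ≤
      Real.exp (-(n * cPw μ (univ.filter fun x ↦ g x ∈ U) A * a ^ 2 / 2)) := by
  have hn' : (0 : ℝ) < n := Nat.cast_pos.2 hn
  have htail := measureReal_sum_le_one_sub_mul_le_of_mem_Icc (s := univ)
    (iIndepFun_hit U g (n := n) hμ hA) (fun _ ↦ (measurable_of_finite _).aemeasurable)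
    (fun j _ ↦ .of_forall (hit_mem_Icc U g j)) ha
  simp only [integral_hit U g hμ hA, Finset.sum_const, Finset.card_univ, Fintype.card_fin,
    nsmul_eq_mul] at htail
  convert htail using 2
  · ext xs
    simp only [empFreq_eq_sum_hit_div, div_le_iff₀ hn']
    ring_nf
  · ring

end SampleLaw

theorem samplePr_empRatio_sub_gt_le {μ : X → ℝ} (hμ : ∀ x, 0 ≤ μ x) {A B : Finset X}
    (hA : 0 < Pw μ A) (hB : 0 < Pw μ B) {U : Finset X} (hU : 0 < cPw μ U B) {g : X → X}
    {nA nB : ℕ} (hnA : 0 < nA) (hnB : 0 < nB) {a e δ : ℝ} (ha : 0 ≤ a) (he : 0 ≤ e) (hδ : 0 ≤ δ)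
    (hpδ : cPw μ (univ.filter fun x ↦ g x ∈ U) A + δ * cPw μ U B ≤ 2)
    (hae : a + 2 * e ≤ δ * cPw μ U B) :
    samplePr μ A B nA nB (fun xs zs ↦
        empRatio U g xs zs - cPw μ (univ.filter fun x ↦ g x ∈ U) A / cPw μ U B > δ) ≤
      Real.exp (-2 * nA * a ^ 2) + Real.exp (-(nB * cPw μ U B * e ^ 2 / 2)) := by
  let : MeasurableSpace X := ⊤
  have := isProbabilityMeasure_sampleLaw hμ hA nA
  have := isProbabilityMeasure_sampleLaw hμ hB nB
  have hp := cPw_nonneg hμ (univ.filter fun x ↦ g x ∈ U) A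
  set p := cPw μ (univ.filter fun x ↦ g x ∈ U) A
  set q := cPw μ U B with hq
  let upper : Set (Fin nA → X) := {xs | p + a ≤ empFreq U g xs}
  let lower : Set (Fin nB → X) := {zs | empFreq U id zs ≤ q * (1 - e)}
  have hsubset : {ω : (Fin nA → X) × (Fin nB → X) | empRatio U g ω.1 ω.2 - p / q > δ} ⊆
      upper ×ˢ Set.univ ∪ Set.univ ×ˢ lower := by
    rintro ⟨xs, zs⟩ hω
    by_contra hgood
    simp only [upper, lower, Set.mem_union, Set.mem_prod, Set.mem_univ, Set.mem_ofPred_eq,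
      and_true, true_and, not_or, not_le] at hgood
    have hratio : empRatio U g xs zs ≤ p / q + δ :=
      div_le_div_add_of_le_of_mul_le hp hU he (by linarith) hδ hpδ hae hgood.1.le hgood.2
    exact (sub_le_iff_le_add'.2 hratio).not_gt hω
  rw [samplePr_eq_measureReal hμ]
  calc _ ≤ ((sampleLaw μ A nA).prod (sampleLaw μ B nB)).real
          (upper ×ˢ Set.univ ∪ Set.univ ×ˢ lower) := measureReal_mono hsubset
    _ ≤ (sampleLaw μ A nA).real upper + (sampleLaw μ B nB).real lower := by
        refine (measureReal_union_le _ _).trans_eq ?_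
        simp only [measureReal_prod_prod, probReal_univ, mul_one, one_mul]
    _ ≤ _ := by
        refine add_le_add (sampleLaw_real_cPw_add_le_empFreq U g hμ hA hnA ha) ?_
        simpa [hq] using sampleLaw_real_empFreq_le_cPw_mul_one_sub U id hμ hB hnB he

theorem fixed_set_one_sided_concentration_general
    (μ : X → ℝ) (A B U : Finset X) (n : X → X) (qbar δ : ℝ) (nA nB : ℕ)
    (hμ : ∀ x, 0 ≤ μ x) (hA : 0 < Pw μ A) (hB : 0 < Pw μ B)
    (hqbar : 0 < qbar) (hq : qbar ≤ cPw μ U B)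
    (hnA : 0 < nA) (hnB : 0 < nB) (hδ : 0 ≤ δ)
    (hpδ : cPw μ (univ.filter fun x ↦ n x ∈ U) A + δ * cPw μ U B ≤ 2) :
    samplePr μ A B nA nB (fun xs zs ↦
        empRatio U n xs zs - cPw μ (univ.filter fun x ↦ n x ∈ U) A / cPw μ U B > δ) ≤
      2 * Real.exp (-2 * nA * δ ^ 2 *
        ((nB * qbar / nA) * qbar ^ 2 / (4 + √(nB * qbar / nA)) ^ 2)) := by
  obtain ⟨a, e, ha, he, hae, hupper, hlower⟩ := exists_add_two_mul_eq_of_exponents_eq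
    (k := nA) (b := nB * qbar) (c := δ * qbar) (by positivity) (by positivity) (by positivity)
  calc _ ≤ Real.exp (-2 * nA * a ^ 2) + Real.exp (-(nB * cPw μ U B * e ^ 2 / 2)) :=
        samplePr_empRatio_sub_gt_le hμ hA hB (hqbar.trans_le hq) hnA hnB ha he hδ hpδ
          (hae.trans_le (by gcongr))
    _ ≤ Real.exp (-2 * nA * a ^ 2) + Real.exp (-(nB * qbar * e ^ 2 / 2)) := by gcongr
    _ = _ := by
        rw [two_mul]
        congr 2
        · linear_combination -hupper
        · linear_combination -hlower

/-- Lemma `lemm:fixed-U-concentration`: one-sided concentration of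
the empirical expansion ratio for a fixed set. -/
theorem fixed_set_one_sided_concentration
    (μ : X → ℝ) (A B U : Finset X) (n : X → X) (qbar δ : ℝ) (nA nB : ℕ)
    (hμ : ∀ x, 0 ≤ μ x) (hμ1 : ∑ x, μ x = 1)
    (hA : 0 < Pw μ A) (hB : 0 < Pw μ B)
    (hn : ∀ x ∈ A, n x ∈ B)
    (hqbar : 0 < qbar) (hq : qbar ≤ cPw μ U B)
    (hnA : 0 < nA) (hnB : 0 < nB)
    (hδ0 : 0 < δ) (hδ1 : δ ≤ 1) :
    samplePr μ A B nA nB (fun xs zs =>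
        empRatio U n xs zs -
          cPw μ (univ.filter fun x => n x ∈ U) A / cPw μ U B > δ) ≤
      2 * Real.exp (-2 * nA * δ ^ 2 *
        ((nB * qbar / nA) * qbar ^ 2 / (4 + Real.sqrt (nB * qbar / nA)) ^ 2)) := by
  exact fixed_set_one_sided_concentration_general μ A B U n qbar δ nA nB hμ hA hB hqbar hq hnA hnB
    hδ0.le (by linarith [cPw_le_one hμ (univ.filter fun x ↦ n x ∈ U) A,
      mul_le_one₀ hδ1 (cPw_nonneg hμ U B) (cPw_le_one hμ U B)])
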